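/- For any cubic homogeneous polynomial f in n variables and any integer r ≥ 2, one has f_{Δ(n,r)} − f̲ ≤ (4/r − 4/r^2)·(f̄ − f̲). -/

import Mathlib

/-- The regular grid `Δ(n,r)` in the standard simplex. -/
def grid (n r : ℕ) : Set (Fin n → ℝ) :=
  {x | x ∈ stdSimplex ℝ (Fin n) ∧ ∀ i, ∃ m : ℕ, (r : ℝ) * x i = m}

/-- `T` is a symmetric trilinear form representing `f` on the diagonal. -/
structure SymTri {n : ℕ} (f : (Fin n → ℝ) → ℝ)
    (T : (Fin n → ℝ) → (Fin n → ℝ) → (Fin n → ℝ) → ℝ) : Prop where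
  add : ∀ a a' b c, T (a + a') b c = T a b c + T a' b c
  smul : ∀ (t : ℝ) a b c, T (t • a) b c = t * T a b c
  swap : ∀ a b c, T a b c = T b a c
  swap2 : ∀ a b c, T a b c = T a c b
  diag : ∀ y, T y y y = f y

lemma exists_symTri_monomial {n : ℕ} (d : Fin n →₀ ℕ) (hd : d.degree = 3) (c : ℝ) :
    ∃ T, SymTri (fun y : Fin n → ℝ => MvPolynomial.eval y (MvPolynomial.monomial d c)) T := by
  have h3 : (Finsupp.toMultiset d).card = 3 := by
    rw [Finsupp.card_toMultiset]; exact hd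
  obtain ⟨i, j, k, hijk⟩ := Multiset.card_eq_three.1 h3
  have hd' : d = Finsupp.single i 1 + Finsupp.single j 1 + Finsupp.single k 1 := by
    apply Multiset.toFinsupp.symm.injective
    change Finsupp.toMultiset d = Finsupp.toMultiset _
    rw [hijk]
    simp [Finsupp.toMultiset_single]
  refine ⟨fun a b e => c / 6 * (a i * b j * e k + a i * b k * e j + a j * b i * e k
    + a j * b k * e i + a k * b i * e j + a k * b j * e i), ?_, ?_, ?_, ?_, ?_⟩
  · intros; simp only [Pi.add_apply]; ring
  · intros; simp only [Pi.smul_apply, smul_eq_mul]; ring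
  · intros; ring
  · intros; ring
  · intro y
    have : MvPolynomial.eval y (MvPolynomial.monomial d c) = c * (y i * y j * y k) := by
      rw [MvPolynomial.eval_monomial, hd', Finsupp.prod_add_index', Finsupp.prod_add_index']
      · simp
      all_goals simp [pow_add]
    simp only [this]; ring

lemma exists_symTri {n : ℕ} (p : MvPolynomial (Fin n) ℝ) (hp : p.IsHomogeneous 3) :
    ∃ T, SymTri (fun y : Fin n → ℝ => MvPolynomial.eval y p) T := by
  have hT : ∀ d : Fin n →₀ ℕ, ∃ T, SymTri
      (fun y : Fin n → ℝ => MvPolynomial.eval y (MvPolynomial.monomial d (p.coeff d))) T := by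
    intro d
    by_cases h : p.coeff d = 0
    · refine ⟨fun _ _ _ => 0, ?_, ?_, ?_, ?_, ?_⟩ <;> simp [h]
    · apply exists_symTri_monomial
      have := hp h
      rw [Finsupp.degree_eq_weight_one]; exact this
  choose T hT using hT
  refine ⟨fun a b c => ∑ d ∈ p.support, T d a b c, ?_, ?_, ?_, ?_, ?_⟩
  · intros; simp only [(hT _).add, Finset.sum_add_distrib]
  · intros; simp only [(hT _).smul, Finset.mul_sum]
  · intros; exact Finset.sum_congr rfl fun d _ => (hT d).swap _ _ _
  · intros; exact Finset.sum_congr rfl fun d _ => (hT d).swap2 _ _ _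
  · intro y
    conv_rhs => rw [p.as_sum]
    rw [map_sum]
    exact Finset.sum_congr rfl fun d _ => (hT d).diag y

section
variable {n : ℕ} {f : (Fin n → ℝ) → ℝ} {T : (Fin n → ℝ) → (Fin n → ℝ) → (Fin n → ℝ) → ℝ}

/-- Standard basis vectors. -/
def ee {n : ℕ} (i : Fin n) : Fin n → ℝ := Pi.single i 1

lemma SymTri.sum_left (h : SymTri f T) (x b c : Fin n → ℝ) :
    ∑ i, x i * T (ee i) b c = T x b c := by
  let l : (Fin n → ℝ) →ₗ[ℝ] ℝ :=
    { toFun := fun a => T a b c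
      map_add' := fun a a' => h.add a a' b c
      map_smul' := fun t a => h.smul t a b c }
  have := (LinearMap.pi_apply_eq_sum_univ l x).symm
  simp only [smul_eq_mul] at this
  have he : ∀ i : Fin n, (ee i : Fin n → ℝ) = fun j => if i = j then 1 else 0 := by
    intro i
    ext j
    simp [ee, Pi.single_apply, eq_comm]
  simp only [he]
  exact this

lemma SymTri.add2 (h : SymTri f T) (a b b' c : Fin n → ℝ) :
    T a (b + b') c = T a b c + T a b' c := by
  rw [h.swap, h.add, h.swap b, h.swap b']

lemma SymTri.add3 (h : SymTri f T) (a b c c' : Fin n → ℝ) :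
    T a b (c + c') = T a b c + T a b c' := by
  rw [h.swap2, h.add2, h.swap2 a c, h.swap2 a c']

/-- The diagonal functional. -/
def DD (T : (Fin n → ℝ) → (Fin n → ℝ) → (Fin n → ℝ) → ℝ) (x v : Fin n → ℝ) : ℝ :=
  ∑ j, x j * T (ee j) (ee j) v

/-- The expected vertex value. -/
def LL (T : (Fin n → ℝ) → (Fin n → ℝ) → (Fin n → ℝ) → ℝ) (x : Fin n → ℝ) : ℝ :=
  ∑ j, x j * T (ee j) (ee j) (ee j)

lemma SymTri.DD_add (h : SymTri f T) (x v w : Fin n → ℝ) :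
    DD T x (v + w) = DD T x v + DD T x w := by
  simp only [DD, h.add3, mul_add, Finset.sum_add_distrib]

lemma SymTri.sum_DD (h : SymTri f T) (x : Fin n → ℝ) :
    ∑ i, x i * DD T x (ee i) = DD T x x := by
  simp only [DD, Finset.mul_sum]
  rw [Finset.sum_comm]
  refine Finset.sum_congr rfl fun j _ => ?_
  rw [h.swap2, h.swap, ← h.sum_left, Finset.mul_sum]
  refine Finset.sum_congr rfl fun i _ => ?_
  rw [h.swap2 (ee j), h.swap (ee j)]
  ring

/-- The expectation of `f (v + S)`, where `S` is multinomial with parameters `r`, `x`. -/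
def Phi (T : (Fin n → ℝ) → (Fin n → ℝ) → (Fin n → ℝ) → ℝ) (x : Fin n → ℝ) (r : ℝ)
    (v : Fin n → ℝ) : ℝ :=
  T v v v + 3 * r * T x v v + 3 * r * DD T x v + 3 * r * (r - 1) * T x x v + r * LL T x
    + 3 * r * (r - 1) * DD T x x + r * (r - 1) * (r - 2) * T x x x

lemma SymTri.Phi_succ (h : SymTri f T) (x : Fin n → ℝ) (hx : ∑ i, x i = 1) (r : ℝ)
    (v : Fin n → ℝ) : ∑ i, x i * Phi T x r (v + ee i) = Phi T x (r + 1) v := by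
  have key : ∀ i, x i * Phi T x r (v + ee i) =
      x i * Phi T x r v + 3 * (x i * T (ee i) v v) + 3 * (x i * T (ee i) (ee i) v)
      + x i * T (ee i) (ee i) (ee i) + 6 * r * (x i * T (ee i) x v)
      + 3 * r * (x i * T (ee i) (ee i) x) + 3 * r * (x i * DD T x (ee i))
      + 3 * r * (r - 1) * (x i * T (ee i) x x) := by
    intro i
    simp only [Phi, h.DD_add, h.add, h.add2, h.add3]
    rw [h.swap v (ee i) v, h.swap2 v v (ee i), h.swap v (ee i) v, h.swap2 (ee i) v (ee i),
      h.swap v (ee i) (ee i), h.swap2 (ee i) v (ee i), h.swap x (ee i) v, h.swap2 x v (ee i),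
      h.swap x (ee i) v, h.swap x (ee i) (ee i), h.swap2 (ee i) x (ee i),
      h.swap2 x x (ee i), h.swap x (ee i) x]
    ring
  simp only [key, Finset.sum_add_distrib, ← Finset.mul_sum, ← Finset.sum_mul, hx, h.sum_left,
    h.sum_DD]
  have e1 : ∑ i, x i * T (ee i) (ee i) v = DD T x v := rfl
  have e2 : ∑ i, x i * T (ee i) (ee i) x = DD T x x := rfl
  have e3 : ∑ i, x i * T (ee i) (ee i) (ee i) = LL T x := rfl
  rw [e1, e2, e3]
  simp only [Phi]
  ring

lemma exists_le_avg (x F : Fin n → ℝ) (hx0 : ∀ i, 0 ≤ x i) (hx : ∑ i, x i = 1) :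
    ∃ i, F i ≤ ∑ j, x j * F j := by
  by_contra! hc
  set A := ∑ j, x j * F j with hA
  have h1 : ∑ j, x j * (F j - A) = 0 := by
    simp only [mul_sub, Finset.sum_sub_distrib, ← Finset.sum_mul, hx, ← hA]; ring
  have h2 := (Finset.sum_eq_zero_iff_of_nonneg
    (fun j _ => mul_nonneg (hx0 j) (sub_nonneg.2 (hc j).le))).1 h1
  have h3 : ∑ i, x i = 0 := Finset.sum_eq_zero fun i hi => by
    rcases mul_eq_zero.1 (h2 i hi) with h | h
    · exact h
    · linarith [hc i]
  linarith

lemma avg_le (x F : Fin n → ℝ) (hx0 : ∀ i, 0 ≤ x i) (hx : ∑ i, x i = 1) (M : ℝ)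
    (hF : ∀ i, F i ≤ M) : ∑ i, x i * F i ≤ M := by
  calc ∑ i, x i * F i ≤ ∑ i, x i * M :=
        Finset.sum_le_sum fun i _ => mul_le_mul_of_nonneg_left (hF i) (hx0 i)
    _ = M := by rw [← Finset.sum_mul, hx, one_mul]

lemma SymTri.exists_round (h : SymTri f T) (x : Fin n → ℝ) (hx0 : ∀ i, 0 ≤ x i)
    (hx : ∑ i, x i = 1) (r : ℕ) : ∀ v : Fin n → ℝ, ∃ s : Fin n → ℕ, ∑ i, s i = r ∧
      f (v + fun i => (s i : ℝ)) ≤ Phi T x r v := by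
  induction r with
  | zero =>
    intro v
    refine ⟨0, by simp, ?_⟩
    have : (v + fun i => (((0 : Fin n → ℕ) i : ℕ) : ℝ)) = v := by ext; simp
    rw [this, ← h.diag]
    simp [Phi]
  | succ r ih =>
    intro v
    obtain ⟨i, hi⟩ := exists_le_avg x (fun i => Phi T x r (v + ee i)) hx0 hx
    rw [h.Phi_succ x hx] at hi
    obtain ⟨s, hs, hle⟩ := ih (v + ee i)
    refine ⟨s + Pi.single i 1, by simp [Finset.sum_add_distrib, hs], ?_⟩
    have : (v + fun j => (((s + Pi.single i 1 : Fin n → ℕ) j : ℕ) : ℝ))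
        = v + ee i + fun j => (s j : ℝ) := by
      ext j
      by_cases hj : j = i
      · subst hj; simp [ee]; ring
      · simp [ee, hj]
    rw [this]
    push_cast
    exact hle.trans hi

lemma SymTri.bound (h : SymTri f T) (x : Fin n → ℝ) (hx0 : ∀ i, 0 ≤ x i)
    (hx : ∑ i, x i = 1) (M : ℝ) (hM : ∀ i j, f (ee i + ee j) ≤ M) :
    2 * LL T x + 6 * DD T x x ≤ M := by
  have h1 : ∀ i, ∑ j, x j * f (ee i + ee j) =
      T (ee i) (ee i) (ee i) + 3 * T (ee i) (ee i) x + 3 * DD T x (ee i) + LL T x := by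
    intro i
    have key : ∀ j, x j * f (ee i + ee j) = x j * T (ee i) (ee i) (ee i)
        + 3 * (x j * T (ee j) (ee i) (ee i)) + 3 * (x j * T (ee j) (ee j) (ee i))
        + x j * T (ee j) (ee j) (ee j) := by
      intro j
      rw [← h.diag]
      simp only [h.add, h.add2, h.add3]
      rw [h.swap2 (ee i) (ee i) (ee j), h.swap (ee i) (ee j) (ee i),
        h.swap (ee i) (ee j) (ee j), h.swap2 (ee j) (ee i) (ee j)]
      ring
    simp only [key, Finset.sum_add_distrib, ← Finset.mul_sum, ← Finset.sum_mul, hx, h.sum_left]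
    rw [h.swap x, h.swap2 (ee i) x]
    simp only [DD, LL]
    ring
  have h2 := avg_le x _ hx0 hx M (fun i => avg_le x _ hx0 hx M (hM i))
  simp only [h1] at h2
  have key : ∀ i, x i * (T (ee i) (ee i) (ee i) + 3 * T (ee i) (ee i) x + 3 * DD T x (ee i)
      + LL T x) = x i * T (ee i) (ee i) (ee i) + 3 * (x i * T (ee i) (ee i) x)
      + 3 * (x i * DD T x (ee i)) + x i * LL T x := by intro i; ring
  simp only [key, Finset.sum_add_distrib, ← Finset.mul_sum, ← Finset.sum_mul, hx, h.sum_DD] at h2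
  have e2 : ∑ i, x i * T (ee i) (ee i) x = DD T x x := rfl
  have e3 : ∑ i, x i * T (ee i) (ee i) (ee i) = LL T x := rfl
  rw [e2, e3] at h2
  linarith

lemma SymTri.cube (h : SymTri f T) (t : ℝ) (y : Fin n → ℝ) : f (t • y) = t ^ 3 * f y := by
  rw [← h.diag, ← h.diag, h.smul, h.swap, h.smul, h.swap2, h.swap, h.smul]
  ring

end

theorem stmt10 (n r : ℕ) (hr : 2 ≤ r) (p : MvPolynomial (Fin n) ℝ)
    (hp : p.IsHomogeneous 3) (fmin fmax fgrid : ℝ)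
    (hmin : IsLeast ((fun y => MvPolynomial.eval y p) '' stdSimplex ℝ (Fin n)) fmin)
    (hmax : IsGreatest ((fun y => MvPolynomial.eval y p) '' stdSimplex ℝ (Fin n)) fmax)
    (hgrid : IsLeast ((fun y => MvPolynomial.eval y p) '' grid n r) fgrid) :
    fgrid - fmin ≤ (4 / r - 4 / (r : ℝ) ^ 2) * (fmax - fmin) := by
  obtain ⟨T, h⟩ := exists_symTri p hp
  obtain ⟨⟨x, ⟨hx0, hx⟩, hfx⟩, hlow⟩ := hmin
  have hup := hmax.2
  have hR : (2 : ℝ) ≤ r := by exact_mod_cast hr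
  have hRpos : (0 : ℝ) < r := by linarith
  set f : (Fin n → ℝ) → ℝ := fun y => MvPolynomial.eval y p with hf
  obtain ⟨s, hs, hle⟩ := h.exists_round x hx0 hx r 0
  have hsum : ∑ i, (s i : ℝ) = r := by exact_mod_cast hs
  have hg : fgrid ≤ f ((r : ℝ)⁻¹ • fun i => (s i : ℝ)) := by
    refine hgrid.2 ⟨_, ⟨⟨fun i => ?_, ?_⟩, fun i => ⟨s i, ?_⟩⟩, rfl⟩
    · simp only [Pi.smul_apply, smul_eq_mul]; positivity
    · simp only [Pi.smul_apply, smul_eq_mul, ← Finset.mul_sum, hsum]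
      exact inv_mul_cancel₀ hRpos.ne'
    · simp only [Pi.smul_apply, smul_eq_mul]
      exact mul_inv_cancel_left₀ hRpos.ne' _
  rw [h.cube] at hg
  rw [zero_add] at hle
  have hz : ∀ b c, T 0 b c = 0 := fun b c => by
    have := h.smul 0 0 b c
    simpa using this
  have hz3 : ∀ a b, T a b 0 = 0 := fun a b => by rw [h.swap2, h.swap, hz]
  have hPhi : Phi T x r 0 = r * LL T x + 3 * r * (r - 1) * DD T x x
      + r * (r - 1) * (r - 2) * fmin := by
    have hTx : T x x x = fmin := by rw [h.diag]; exact hfx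
    simp [Phi, hz3, DD, hTx]
  rw [hPhi] at hle
  have hM : ∀ i j, f (ee i + ee j) ≤ 8 * fmax := by
    intro i j
    have h1 : f ((2 : ℝ)⁻¹ • (ee i + ee j)) ≤ fmax := by
      refine hup ⟨_, ⟨fun k => ?_, ?_⟩, rfl⟩
      · simp only [Pi.smul_apply, smul_eq_mul, Pi.add_apply, ee, Pi.single_apply]
        positivity
      · simp only [Pi.smul_apply, smul_eq_mul, Pi.add_apply, ee, ← Finset.mul_sum,
          Finset.sum_add_distrib, Finset.sum_pi_single', Finset.mem_univ, if_true]
        norm_num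
    rw [h.cube] at h1
    linarith
  have hB := h.bound x hx0 hx _ hM
  have hL : fmin ≤ LL T x := by
    have := avg_le x (fun i => - T (ee i) (ee i) (ee i)) hx0 hx (-fmin) (fun i => by
      have : fmin ≤ f (ee i) := hlow ⟨ee i, by
        refine ⟨fun k => ?_, ?_⟩
        · simp only [ee, Pi.single_apply]; positivity
        · simp [ee], rfl⟩
      rw [h.diag]; linarith)
    simp only [mul_neg, Finset.sum_neg_distrib] at this
    have e3 : ∑ i, x i * T (ee i) (ee i) (ee i) = LL T x := rfl
    rw [e3] at this
    linarith
  have hfin : f (fun i => (s i : ℝ)) ≤ r * (r ^ 2 * fmin + 4 * (r - 1) * (fmax - fmin)) := by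
    refine hle.trans ?_
    have : LL T x + 3 * (r - 1) * DD T x x + (r - 1) * (r - 2) * fmin ≤
        r ^ 2 * fmin + 4 * (r - 1) * (fmax - fmin) := by
      nlinarith [mul_le_mul_of_nonneg_left hB (by linarith : (0:ℝ) ≤ r - 1),
        mul_le_mul_of_nonneg_left hL (by linarith : (0:ℝ) ≤ r - 2)]
    nlinarith [mul_le_mul_of_nonneg_left this hRpos.le]
  have h3 := mul_le_mul_of_nonneg_left hfin (by positivity : (0:ℝ) ≤ (r:ℝ)⁻¹ ^ 3)
  have h4 : (r:ℝ)⁻¹ ^ 3 * (r * (r ^ 2 * fmin + 4 * (r - 1) * (fmax - fmin)))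
      = fmin + (4 / r - 4 / (r : ℝ) ^ 2) * (fmax - fmin) := by
    field_simp
  linarith
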